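/- arXiv:1407.7638 — 3 statements merged into one kernel-verified Lean document; each statement's English description precedes it below -/
import Mathlib

section
/- Let p, q be coprime positive integers. In A = ℂ[X,Y,U,V]/⟨XV − YU − 1⟩, the ℂ-linear span of the images of the monomials x^i y^j u^k v^ℓ with p(i − ℓ) + q(j − k) = 0 equals the ℂ-subalgebra of A generated by the three elements x^q u^p, x v, and y^p v^q. (The ring of invariants of the 𝔾_m-action on SL₂ given by (x, u; y, v)·λ = (λ^p x, λ^{-q} u; λ^q y, λ^{-p} v) is generated by x^q u^p, xv, y^p v^q; this is the algebraic content of the statement that ψ(x,u;y,v) = (x^q u^p, xv, y^p v^q) is the quotient morphism.) -/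
/-!
A monomial `x^i y^j u^k v^l` has weight zero iff `p (i - l) = q (k - j)`. As `p` and `q` are
coprime, `i - l = q t` and `k - j = p t` for some integer `t` (`exists_of_weight_zero`), so the
monomial is `(xv)^l (yu)^j (x^q u^p)^t` if `t ≥ 0`, and `(xv)^i (yu)^k (y^p v^q)^(-t)` otherwise.
Since `yu = xv - 1` in `A` (`sy_mul_su`), it lies in the subalgebra. Conversely, the weight-zero
monomials contain the three generators and are closed under multiplication, so their span
contains the subalgebra, which is the span of all products of generators.
-/

open MvPolynomial

noncomputable section

/-- The ideal `⟨XV − YU − 1⟩` of `ℂ[X, Y, U, V]` (with `X = X 0`, `Y = X 1`, `U = X 2`,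
`V = X 3`). -/
def sl2Ideal : Ideal (MvPolynomial (Fin 4) ℂ) :=
  Ideal.span {X 0 * X 3 - X 1 * X 2 - 1}

/-- The coordinate ring `A = ℂ[X,Y,U,V]/⟨XV − YU − 1⟩` of `SL₂` over `ℂ`. -/
abbrev SL2R : Type := MvPolynomial (Fin 4) ℂ ⧸ sl2Ideal

/-- `x`, the image of `X` in `A`. -/
def sx : SL2R := Ideal.Quotient.mk sl2Ideal (X 0)
/-- `y`, the image of `Y` in `A`. -/
def sy : SL2R := Ideal.Quotient.mk sl2Ideal (X 1)
/-- `u`, the image of `U` in `A`. -/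
def su : SL2R := Ideal.Quotient.mk sl2Ideal (X 2)
/-- `v`, the image of `V` in `A`. -/
def sv : SL2R := Ideal.Quotient.mk sl2Ideal (X 3)

/-- The defining relation of `SL₂`, in the form that puts `y u` in the subalgebra generated
by `x v`. -/
lemma sy_mul_su : sy * su = sx * sv - 1 := by
  have h : Ideal.Quotient.mk sl2Ideal (X 0 * X 3 - X 1 * X 2 - 1) = 0 :=
    Ideal.Quotient.eq_zero_iff_mem.mpr (Ideal.subset_span rfl)
  simp only [map_sub, map_mul, map_one] at h
  change sx * sv - sy * su - 1 = 0 at h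
  linear_combination -h

/-- Solutions of the weight-zero equation in the half-plane `l ≤ i`; the other half-plane
follows by exchanging `(i, k)` with `(l, j)`. -/
lemma exists_of_weight_zero {p q i j k l : ℕ} (hq : 0 < q) (hpq : Nat.Coprime p q)
    (h : (p : ℤ) * ((i : ℤ) - l) + (q : ℤ) * ((j : ℤ) - k) = 0) (hil : l ≤ i) :
    ∃ t, i = l + q * t ∧ k = j + p * t := by
  obtain ⟨d, rfl⟩ := Nat.exists_eq_add_of_le hil
  have hdvd : (q : ℤ) ∣ (p : ℤ) * d := ⟨k - j, by push_cast at h; linear_combination h⟩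
  have hqd : q ∣ d := hpq.symm.dvd_of_dvd_mul_left (by exact_mod_cast hdvd)
  obtain ⟨t, rfl⟩ := hqd
  refine ⟨t, rfl, ?_⟩
  have hq' : (q : ℤ) ≠ 0 := by exact_mod_cast hq.ne'
  have hk : (k : ℤ) = j + p * t := by
    apply mul_left_cancel₀ hq'
    push_cast at h
    linear_combination -h
  exact_mod_cast hk

/-- For coprime positive integers `p, q`, the ℂ-linear span of the monomials
`x^i y^j u^k v^ℓ` of weight `p(i − ℓ) + q(j − k) = 0` equals the ℂ-subalgebra of `A`
generated by `x^q u^p`, `xv`, and `y^p v^q` (the ring of invariants of the 𝔾ₘ-action on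
`SL₂` of weights `p, q, −q, −p`). -/
theorem stmt17 (p q : ℕ) (hp : 0 < p) (hq : 0 < q) (hpq : Nat.Coprime p q) :
    (↑(Submodule.span ℂ {a : SL2R | ∃ i j k l : ℕ,
        (p : ℤ) * ((i : ℤ) - (l : ℤ)) + (q : ℤ) * ((j : ℤ) - (k : ℤ)) = 0 ∧
        a = sx ^ i * sy ^ j * su ^ k * sv ^ l}) : Set SL2R) =
      ↑(Algebra.adjoin ℂ {sx ^ q * su ^ p, sx * sv, sy ^ p * sv ^ q}) := by
  rw [← Subalgebra.coe_toSubmodule, SetLike.coe_set_eq]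
  apply le_antisymm
  · rw [Submodule.span_le]
    rintro _ ⟨i, j, k, l, h, rfl⟩
    rw [Subalgebra.coe_toSubmodule, SetLike.mem_coe]
    set S := Algebra.adjoin ℂ {sx ^ q * su ^ p, sx * sv, sy ^ p * sv ^ q} with hS
    have h1 : sx ^ q * su ^ p ∈ S := Algebra.subset_adjoin (by simp)
    have h2 : sx * sv ∈ S := Algebra.subset_adjoin (by simp)
    have h3 : sy ^ p * sv ^ q ∈ S := Algebra.subset_adjoin (by simp)
    have h4 : sy * su ∈ S := by
      rw [sy_mul_su]
      exact S.sub_mem h2 S.one_mem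
    rcases le_total l i with hil | hil
    · obtain ⟨t, rfl, rfl⟩ := exists_of_weight_zero hq hpq h hil
      have e : sx ^ (l + q * t) * sy ^ j * su ^ (j + p * t) * sv ^ l =
          (sx * sv) ^ l * (sy * su) ^ j * (sx ^ q * su ^ p) ^ t := by ring
      rw [e]
      exact S.mul_mem (S.mul_mem (S.pow_mem h2 _) (S.pow_mem h4 _)) (S.pow_mem h1 _)
    · obtain ⟨t, rfl, rfl⟩ := exists_of_weight_zero (i := l) (j := k) (k := j) (l := i) hq hpq
        (by linear_combination -h) hil
      have e : sx ^ i * sy ^ (k + p * t) * su ^ k * sv ^ (i + q * t) =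
          (sx * sv) ^ i * (sy * su) ^ k * (sy ^ p * sv ^ q) ^ t := by ring
      rw [e]
      exact S.mul_mem (S.mul_mem (S.pow_mem h2 _) (S.pow_mem h4 _)) (S.pow_mem h3 _)
  · rw [Algebra.adjoin_eq_span]
    apply Submodule.span_mono
    intro a ha
    induction ha using Submonoid.closure_induction with
    | mem a ha =>
      rcases ha with rfl | rfl | rfl
      · exact ⟨q, 0, p, 0, by push_cast; ring, by ring⟩
      · exact ⟨1, 0, 0, 1, by push_cast; ring, by ring⟩
      · exact ⟨0, p, 0, q, by push_cast; ring, by ring⟩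
    | one => exact ⟨0, 0, 0, 0, by simp, by simp⟩
    | mul a b _ _ ha hb =>
      obtain ⟨i, j, k, l, h, rfl⟩ := ha
      obtain ⟨i', j', k', l', h', rfl⟩ := hb
      exact ⟨i + i', j + j', k + k', l + l',
        by push_cast; linear_combination h + h', by ring⟩

end
end

section
/- Let p, q be coprime positive integers. The kernel of the ℂ-algebra homomorphism ℂ[T₁, T₂, T₃] → A = ℂ[X,Y,U,V]/⟨XV − YU − 1⟩ sending T₁ ↦ x^q u^p, T₂ ↦ x v, T₃ ↦ y^p v^q is the principal ideal generated by T₁T₃ − T₂^q (T₂ − 1)^p. (Hence the quotient SL₂ /\!\!/ 𝔾_m is the hypersurface Y = {(a,b,c) ∈ 𝔸³ : ac = b^q (b−1)^p}; note (x^q u^p)(y^p v^q) = (xv)^q (yu)^p = (xv)^q (xv − 1)^p in A.) -/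
/-!
Only the inclusion of the kernel in `(f)`, `f = T₁T₃ − T₂^q (T₂ − 1)^p`, needs an argument.
Let `F` lie in the kernel. Modulo `f` the product `T₁T₃` is a polynomial in `T₂`, so for large `N`
the polynomial `T₁^N F` is congruent modulo `f` to some `G(T₁, T₂)` free of `T₃`
(`exists_elim_T3`). Every point `(a, b, b^q (b - 1)^p / a)` with `a ≠ 0` is the image of a point of
`SL₂(ℂ)` (`exists_point`), so both `F` and `f` vanish there; hence `G(a, b) = 0` whenever `a ≠ 0`,
and `G = 0`. Thus `f ∣ T₁^N F`. As `T₁` is prime and does not divide `f`, it follows that `f ∣ F`.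
-/

open MvPolynomial

noncomputable section

/-- Multiplication by a power of `T₁` eliminates `T₃` modulo `T₁T₃ − r(T₁, T₂)`. -/
lemma exists_elim_T3 (r : MvPolynomial (Fin 2) ℂ) (F : MvPolynomial (Fin 3) ℂ) :
    ∃ (N : ℕ) (G : MvPolynomial (Fin 2) ℂ),
      (X 0 * X 2 - aeval ![X 0, X 1] r : MvPolynomial (Fin 3) ℂ) ∣
        X 0 ^ N * F - aeval ![X 0, X 1] G := by
  induction F using MvPolynomial.induction_on with
  | C a => exact ⟨0, C a, by simp [MvPolynomial.algebraMap_eq]⟩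
  | add F₁ F₂ h₁ h₂ =>
    obtain ⟨N₁, G₁, k₁, h₁⟩ := h₁
    obtain ⟨N₂, G₂, k₂, h₂⟩ := h₂
    refine ⟨N₁ + N₂, X 0 ^ N₂ * G₁ + X 0 ^ N₁ * G₂, X 0 ^ N₂ * k₁ + X 0 ^ N₁ * k₂, ?_⟩
    simp only [map_add, map_mul, map_pow, aeval_X, Matrix.cons_val_zero]
    linear_combination X 0 ^ N₂ * h₁ + X 0 ^ N₁ * h₂
  | mul_X F i h =>
    obtain ⟨N, G, k, h⟩ := h
    fin_cases i
    · refine ⟨N, G * X 0, k * X 0, ?_⟩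
      simp only [map_mul, aeval_X, Matrix.cons_val_zero, Fin.zero_eta]
      linear_combination X 0 * h
    · refine ⟨N, G * X 1, k * X 1, ?_⟩
      simp only [map_mul, aeval_X, Matrix.cons_val_one, Matrix.cons_val_fin_one, Fin.mk_one]
      linear_combination X 1 * h
    · -- `T₁^(N+1) F T₃ ≡ G T₁ T₃ ≡ G r`
      refine ⟨N + 1, G * r, X 0 * X 2 * k + aeval ![X 0, X 1] G, ?_⟩
      simp only [map_mul, Fin.reduceFinMk]
      linear_combination X 0 * X 2 * h

/-- Points of the hypersurface with `a ≠ 0` lift to `SL₂(ℂ)`: choose `t` with `t^(p+q) = a` and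
take `x = u = t`, `v = b / t`, `y = (b - 1) / t`. -/
lemma exists_point (p q : ℕ) (hp : 0 < p) (a b : ℂ) (ha : a ≠ 0) :
    ∃ φ : SL2R →ₐ[ℂ] ℂ, φ (sx ^ q * su ^ p) = a ∧ φ (sx * sv) = b ∧
      a * φ (sy ^ p * sv ^ q) = b ^ q * (b - 1) ^ p := by
  obtain ⟨t, ht⟩ := IsAlgClosed.exists_pow_nat_eq a (n := p + q) (by omega)
  have ht0 : t ≠ 0 := by
    rintro rfl
    exact ha (by rw [← ht, zero_pow (by omega)])
  let e : MvPolynomial (Fin 4) ℂ →ₐ[ℂ] ℂ := aeval ![t, (b - 1) / t, t, b / t]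
  have he : ∀ P ∈ sl2Ideal, e P = 0 := by
    intro P hP
    obtain ⟨k, rfl⟩ := Ideal.mem_span_singleton.1 hP
    have : e (X 0 * X 3 - X 1 * X 2 - 1) = 0 := by
      simp [e]
      field_simp
      ring
    rw [map_mul, this, zero_mul]
  let φ : SL2R →ₐ[ℂ] ℂ := Ideal.Quotient.liftₐ sl2Ideal e he
  have hx : φ sx = t := by
    change e (X 0) = t
    simp [e]
  have hy : φ sy = (b - 1) / t := by
    change e (X 1) = _
    simp [e]
  have hu : φ su = t := by
    change e (X 2) = t
    simp [e]
  have hv : φ sv = b / t := by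
    change e (X 3) = _
    simp [e]
  refine ⟨φ, ?_, ?_, ?_⟩
  · rw [map_mul, map_pow, map_pow, hx, hu, ← ht]
    ring
  · rw [map_mul, hx, hv]
    field_simp
  · rw [map_mul, map_pow, map_pow, hy, hv, ← ht, div_pow, div_pow, pow_add]
    field_simp

/-- The relation `x v = 1 + y u` of `SL₂`. -/
lemma sl2_relation : sx * sv - sy * su - 1 = 0 :=
  Ideal.Quotient.eq_zero_iff_mem.2 (Ideal.mem_span_singleton_self _)

/-- For coprime positive integers `p, q`, the kernel of the ℂ-algebra
homomorphism `ℂ[T₁, T₂, T₃] → A` sending `T₁ ↦ x^q u^p`, `T₂ ↦ xv`, `T₃ ↦ y^p v^q` is the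
principal ideal generated by `T₁T₃ − T₂^q (T₂ − 1)^p`. -/
theorem stmt18 (p q : ℕ) (hp : 0 < p) (hq : 0 < q) (hpq : Nat.Coprime p q) :
    RingHom.ker (aeval ![sx ^ q * su ^ p, sx * sv, sy ^ p * sv ^ q] :
        MvPolynomial (Fin 3) ℂ →ₐ[ℂ] SL2R) =
      Ideal.span {X 0 * X 2 - (X 1) ^ q * (X 1 - 1) ^ p} := by
  apply le_antisymm
  · intro F hF
    rw [RingHom.mem_ker] at hF
    rw [Ideal.mem_span_singleton]
    obtain ⟨N, G, hG⟩ := exists_elim_T3 (X 1 ^ q * (X 1 - 1) ^ p) F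
    simp only [map_mul, map_pow, map_sub, map_one, aeval_X, Matrix.cons_val_one,
      Matrix.cons_val_fin_one] at hG
    have hG0 : G = 0 := by
      -- The lifting of points needs `T₁ ≠ 0`; the factor `T₁` takes care of the other points.
      have hXG : X 0 * G = 0 := by
        refine MvPolynomial.funext fun s => ?_
        rw [map_mul, eval_X, map_zero]
        by_cases ha : s 0 = 0
        · rw [ha, zero_mul]
        obtain ⟨φ, h1, h2, h3⟩ := exists_point p q hp (s 0) (s 1) ha
        let ψ : MvPolynomial (Fin 3) ℂ →ₐ[ℂ] ℂ :=
          φ.comp (aeval ![sx ^ q * su ^ p, sx * sv, sy ^ p * sv ^ q])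
        have hψ0 : ψ (X 0) = s 0 := by simpa [ψ] using h1
        have hψ1 : ψ (X 1) = s 1 := by simpa [ψ] using h2
        have hψ2 : s 0 * ψ (X 2) = s 1 ^ q * (s 1 - 1) ^ p := by simpa [ψ] using h3
        have hψF : ψ F = 0 := by
          change φ (aeval _ F) = 0
          exact (congrArg φ hF).trans (map_zero φ)
        have hψG : ψ (aeval ![X 0, X 1] G) = eval s G := by
          have : ψ.comp (aeval ![X 0, X 1]) = aeval s := by
            ext i
            fin_cases i
            · simpa using hψ0
            · simpa using hψ1
          exact (DFunLike.congr_fun this G).trans (RingHom.congr_fun (coe_aeval_eq_eval s) G)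
        obtain ⟨k, hk⟩ := hG
        have := congrArg ψ hk
        simp only [map_sub, map_mul, map_pow, map_one, hψ0, hψ1, hψ2, hψF, hψG] at this
        linear_combination -(s 0) * this
      exact (mul_eq_zero.1 hXG).resolve_left (X_ne_zero 0)
    rw [hG0, map_zero, sub_zero] at hG
    obtain ⟨k, hk⟩ := hG
    have hnd : ¬ (X 0 : MvPolynomial (Fin 3) ℂ) ∣ X 0 * X 2 - X 1 ^ q * (X 1 - 1) ^ p := by
      -- at `(0, 2, 0)` the right side takes the value `-2^q`
      rintro ⟨c, hc⟩
      have := congrArg (eval ![0, 2, 0]) hc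
      norm_num at this
    obtain ⟨c, rfl⟩ := (X_prime (i := 0)).pow_dvd_of_dvd_mul_left N hnd (Dvd.intro F hk)
    refine ⟨c, mul_left_cancel₀ (pow_ne_zero N (X_ne_zero (0 : Fin 3))) ?_⟩
    linear_combination hk
  · rw [Ideal.span_singleton_le_iff_mem, RingHom.mem_ker]
    have h : sx * sv - 1 = sy * su := by linear_combination sl2_relation
    simp only [map_sub, map_mul, map_pow, map_one, aeval_X, Matrix.cons_val_zero,
      Matrix.cons_val_one, Matrix.cons_val, h]
    ring

end
end

section
/- The kernel of the ℂ-algebra homomorphism φ : ℂ[T₁, T₂, T₃, T₄, T₅] → ℂ[x, y, t] determined by T₁ ↦ x, T₂ ↦ y, T₃ ↦ xt, T₄ ↦ yt, T₅ ↦ xt² − t is exactly the ideal generated by the three polynomials T₁T₄ − T₂T₃, T₂T₅ + T₄ − T₃T₄, and T₁T₅ − T₃² + T₃. (Hence the subalgebra B = ℂ[x, y, xt, yt, xt² − t] ⊆ ℂ[x, y, t], the coordinate ring of a smooth affine extension of 𝔸²_* × 𝔾_a, is isomorphic to ℂ[T₁,…,T₅] modulo these three relations, and the subvariety Z ⊆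 𝔸⁵ they define is irreducible.) -/
/-!
Write `I` for the ideal of the three relations. They are the `2 × 2` minors of the matrix with rows
`(T₁, T₂, T₃ - 1)` and `(T₃, T₄, T₅)`.

After inverting `T₁`, the relations eliminate `T₄ = T₂T₃ / T₁` and `T₅ = (T₃² - T₃) / T₁`: for every
`f` some `T₁ⁿ f` is congruent modulo `I` to a polynomial `p(T₁, T₂, T₃)` (`exists_elimination`). If
`f` is in the kernel then `p(x, y, xt) = 0`, and so `p = 0` because `x, y, xt` are algebraically
independent (`eq_zero_of_aeval`). Hence `T₁ⁿ f ∈ I`.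

It remains to see that `T₁` is a nonzerodivisor modulo `I` (`mem_of_X_mul_mem`). Given
`T₁ f = a g₁ + b g₂ + c g₃`, reduction modulo `(T₁, T₃)`, then modulo `(T₁, T₂)`, then modulo
`(T₁)` shows that `b`, `c`, `a` can successively be made divisible by `T₁`, using the two
Hilbert–Burch syzygies `T₃ g₂ = T₄ g₃ - T₅ g₁` and `T₂ g₃ = T₁ g₂ + (T₃ - 1) g₁`.
-/

open MvPolynomial

noncomputable section

/-- The ideal generated by the three relations. -/
def relIdeal : Ideal (MvPolynomial (Fin 5) ℂ) :=
  Ideal.span {X 0 * X 3 - X 1 * X 2, X 1 * X 4 + X 3 - X 2 * X 3, X 0 * X 4 - (X 2) ^ 2 + X 2}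

lemma rel₁_mem : (X 0 * X 3 - X 1 * X 2 : MvPolynomial (Fin 5) ℂ) ∈ relIdeal :=
  Ideal.subset_span (by simp)

lemma rel₂_mem : (X 1 * X 4 + X 3 - X 2 * X 3 : MvPolynomial (Fin 5) ℂ) ∈ relIdeal :=
  Ideal.subset_span (by simp)

lemma rel₃_mem : (X 0 * X 4 - (X 2) ^ 2 + X 2 : MvPolynomial (Fin 5) ℂ) ∈ relIdeal :=
  Ideal.subset_span (by simp)

/-- The ideal `(Xᵢ, Xⱼ)` is prime, in the form used below: a factor `g` not vanishing at some point
of the locus `Xᵢ = Xⱼ = 0` can be cancelled. The case `i = j` is allowed. -/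
lemma mem_span_X_pair {n : ℕ} (i j : Fin n) (v : Fin n → ℂ) (hi : v i = 0) (hj : v j = 0)
    {g h : MvPolynomial (Fin n) ℂ} (hg : eval v g ≠ 0)
    (hgh : g * h ∈ Ideal.span {X i, X j}) : h ∈ Ideal.span {X i, X j} := by
  -- `s` sets both variables to zero; it kills the ideal and is the identity modulo it.
  let s : MvPolynomial (Fin n) ℂ →ₐ[ℂ] MvPolynomial (Fin n) ℂ :=
    aeval (fun k => if k = i ∨ k = j then 0 else X k)
  have hs : ∀ f, f - s f ∈ Ideal.span {X i, X j} := by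
    intro f
    have hq : (Ideal.Quotient.mkₐ ℂ (Ideal.span {X i, X j})).comp s
        = Ideal.Quotient.mkₐ ℂ (Ideal.span {X i, X j}) := by
      ext k
      by_cases hk : k = i ∨ k = j
      · have : (X k : MvPolynomial (Fin n) ℂ) ∈ Ideal.span {X i, X j} :=
          Ideal.subset_span (by rcases hk with rfl | rfl <;> simp)
        simpa [s, hk] using (Ideal.Quotient.eq_zero_iff_mem.mpr this).symm
      · simp [s, hk]
    exact Ideal.Quotient.eq.mp (DFunLike.congr_fun hq f).symm
  have hker : Ideal.span {X i, X j} ≤ RingHom.ker s := by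
    rw [Ideal.span_le]
    rintro _ (rfl | rfl) <;> simp [s]
  have hsg : s g ≠ 0 := by
    intro h0
    apply hg
    have hv : (aeval v).comp s = (aeval v : MvPolynomial (Fin n) ℂ →ₐ[ℂ] ℂ) := by
      ext k
      by_cases hk : k = i ∨ k = j
      · have : v k = 0 := by rcases hk with rfl | rfl <;> assumption
        simp [s, hk, this]
      · simp [s, hk]
    have := DFunLike.congr_fun hv g
    simpa [h0, aeval_eq_eval] using this.symm
  have h0 : s g * s h = 0 := by simpa using hker hgh
  have := hs h
  rwa [(mul_eq_zero.mp h0).resolve_left hsg, sub_zero] at this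

/-- `T₁` is a nonzerodivisor modulo the relations. -/
lemma mem_of_X_mul_mem {f : MvPolynomial (Fin 5) ℂ} (hf : X 0 * f ∈ relIdeal) :
    f ∈ relIdeal := by
  obtain ⟨a, b, c, habc⟩ := Submodule.mem_span_triple.mp hf
  simp only [smul_eq_mul] at habc
  -- Modulo `(T₁, T₃)` only the second relation survives, as `T₂T₅ + T₄`.
  have hb : b ∈ Ideal.span {X 0, X 2} := by
    refine mem_span_X_pair 0 2 ![0, 0, 0, 1, 0] rfl rfl (g := X 1 * X 4 + X 3)
      (by simp) ?_
    exact Ideal.mem_span_pair.mpr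
      ⟨f - a * X 3 - c * X 4, a * X 1 + b * X 3 + c * X 2 - c, by linear_combination -habc⟩
  obtain ⟨b₁, b₂, rfl⟩ := Ideal.mem_span_pair.mp hb
  -- After the syzygy `T₃ g₂ = T₄ g₃ - T₅ g₁`, the combination involves `g₁` and `g₃` only, and
  -- modulo `T₁` it is `-T₃` times the element below.
  have hd : X 1 * (a - b₂ * X 4) + (X 2 - 1) * (c + b₂ * X 3) ∈
      Ideal.span {(X 0 : MvPolynomial (Fin 5) ℂ), X 0} := by
    refine mem_span_X_pair 0 0 ![0, 0, 1, 0, 0] rfl rfl (g := X 2) (by simp) ?_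
    exact Ideal.mem_span_pair.mpr
      ⟨(a - b₂ * X 4) * X 3 + (c + b₂ * X 3) * X 4 - (f - b₁ * (X 1 * X 4 + X 3 - X 2 * X 3)), 0,
        by linear_combination habc⟩
  obtain ⟨d₁, d₂, hd⟩ := Ideal.mem_span_pair.mp hd
  have hc : c + b₂ * X 3 ∈ Ideal.span {X 0, X 1} := by
    refine mem_span_X_pair 0 1 0 rfl rfl (g := X 2 - 1) (by simp) ?_
    exact Ideal.mem_span_pair.mpr ⟨d₁ + d₂, -(a - b₂ * X 4), by linear_combination hd⟩
  obtain ⟨c₁, c₂, hc⟩ := Ideal.mem_span_pair.mp hc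
  obtain rfl : c = c₁ * X 0 + c₂ * X 1 - b₂ * X 3 := by linear_combination -hc
  -- After the syzygy `T₂ g₃ = T₁ g₂ + (T₃ - 1) g₁`, only a multiple of `g₁` is left.
  have ha : a - b₂ * X 4 + c₂ * (X 2 - 1) ∈
      Ideal.span {(X 0 : MvPolynomial (Fin 5) ℂ), X 0} := by
    refine mem_span_X_pair 0 0 ![0, 1, 0, 0, 0] rfl rfl (g := X 1) (by simp) ?_
    exact Ideal.mem_span_pair.mpr ⟨d₁ + d₂ - (X 2 - 1) * c₁, 0, by linear_combination hd⟩
  obtain ⟨a₁, a₂, ha⟩ := Ideal.mem_span_pair.mp ha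
  have key : f = (a₁ + a₂) * (X 0 * X 3 - X 1 * X 2)
      + (b₁ + c₂) * (X 1 * X 4 + X 3 - X 2 * X 3) + c₁ * (X 0 * X 4 - (X 2) ^ 2 + X 2) := by
    apply mul_left_cancel₀ (X_ne_zero (R := ℂ) (0 : Fin 5))
    linear_combination -habc - (X 0 * X 3 - X 1 * X 2) * ha
  rw [key]
  exact add_mem (add_mem (Ideal.mul_mem_left _ _ rel₁_mem) (Ideal.mul_mem_left _ _ rel₂_mem))
    (Ideal.mul_mem_left _ _ rel₃_mem)

lemma mem_of_X_pow_mul_mem (n : ℕ) {f : MvPolynomial (Fin 5) ℂ}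
    (hf : X 0 ^ n * f ∈ relIdeal) : f ∈ relIdeal := by
  induction n with
  | zero => simpa using hf
  | succ n ih => exact ih (mem_of_X_mul_mem (by rwa [← mul_assoc, ← pow_succ']))

/-- The inclusion of the polynomials in `T₁, T₂, T₃` into those in `T₁, …, T₅`. -/
def incl : MvPolynomial (Fin 3) ℂ →ₐ[ℂ] MvPolynomial (Fin 5) ℂ :=
  aeval ![X 0, X 1, X 2]

/-- Up to a power of `T₁`, the relations eliminate `T₄` and `T₅`. -/
lemma exists_elimination (f : MvPolynomial (Fin 5) ℂ) :
    ∃ (n : ℕ) (p : MvPolynomial (Fin 3) ℂ), X 0 ^ n * f - incl p ∈ relIdeal := by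
  induction f using MvPolynomial.induction_on with
  | C r => exact ⟨0, C r, by simp [incl, algebraMap_eq]⟩
  | add f g hf hg =>
    obtain ⟨n, p, hp⟩ := hf
    obtain ⟨m, q, hq⟩ := hg
    refine ⟨n + m, X 0 ^ m * p + X 0 ^ n * q, ?_⟩
    have e : incl (X 0) = X 0 := by simp [incl]
    convert add_mem (Ideal.mul_mem_left _ (X 0 ^ m) hp) (Ideal.mul_mem_left _ (X 0 ^ n) hq) using 1
    simp only [map_add, map_mul, map_pow, e]
    ring
  | mul_X f i hf =>
    obtain ⟨n, p, hp⟩ := hf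
    have hX : ∃ q : MvPolynomial (Fin 3) ℂ, X 0 * X i - incl q ∈ relIdeal := by
      fin_cases i
      · exact ⟨X 0 * X 0, by simp [incl]⟩
      · exact ⟨X 0 * X 1, by simp [incl]⟩
      · exact ⟨X 0 * X 2, by simp [incl]⟩
      · exact ⟨X 1 * X 2, by simpa [incl] using rel₁_mem⟩
      · refine ⟨X 2 ^ 2 - X 2, ?_⟩
        convert rel₃_mem using 1
        simp [incl]
        ring
    obtain ⟨q, hq⟩ := hX
    refine ⟨n + 1, p * q, ?_⟩
    convert add_mem (Ideal.mul_mem_left _ (X 0 * X i) hp) (Ideal.mul_mem_left _ (incl p) hq) using 1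
    simp only [map_mul]
    ring

/-- `x, y, xt` are algebraically independent: if `a ≠ 0`, then `p(a, b, c)` is the value of
`p(x, y, xt)` at `(a, b, c / a)`. -/
lemma eq_zero_of_aeval {p : MvPolynomial (Fin 3) ℂ}
    (hp : aeval ![(X 0 : MvPolynomial (Fin 3) ℂ), X 1, X 0 * X 2] p = 0) : p = 0 := by
  have h : X 0 * p = 0 := by
    apply MvPolynomial.funext
    intro v
    by_cases hv : v 0 = 0
    · simp [hv]
    · have hcomp : (aeval ![v 0, v 1, v 2 / v 0]).comp
          (aeval ![(X 0 : MvPolynomial (Fin 3) ℂ), X 1, X 0 * X 2])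
          = (aeval v : MvPolynomial (Fin 3) ℂ →ₐ[ℂ] ℂ) := by
        ext k
        fin_cases k
        · simp
        · simp
        · simp; field_simp
      have h1 := DFunLike.congr_fun hcomp p
      rw [AlgHom.comp_apply, hp, map_zero] at h1
      have h0 : eval v p = 0 := by simpa [aeval_eq_eval] using h1.symm
      simp [h0]
  exact (mul_eq_zero.mp h).resolve_left (X_ne_zero _)

/-- The kernel of the ℂ-algebra homomorphism
`φ : ℂ[T₁, T₂, T₃, T₄, T₅] → ℂ[x, y, t]` determined by `T₁ ↦ x`, `T₂ ↦ y`, `T₃ ↦ xt`,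
`T₄ ↦ yt`, `T₅ ↦ xt² − t` is exactly the ideal generated by the three polynomials
`T₁T₄ − T₂T₃`, `T₂T₅ + T₄ − T₃T₄`, and `T₁T₅ − T₃² + T₃`.
(Here `x = X 0`, `y = X 1`, `t = X 2` in `ℂ[x, y, t]`, and `Tᵢ = X (i-1)` in
`ℂ[T₁, …, T₅]`.) -/
theorem stmt19 :
    RingHom.ker (aeval ![(X 0 : MvPolynomial (Fin 3) ℂ), X 1, X 0 * X 2, X 1 * X 2,
        X 0 * (X 2) ^ 2 - X 2] : MvPolynomial (Fin 5) ℂ →ₐ[ℂ] MvPolynomial (Fin 3) ℂ) =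
      Ideal.span {X 0 * X 3 - X 1 * X 2, X 1 * X 4 + X 3 - X 2 * X 3,
        X 0 * X 4 - (X 2) ^ 2 + X 2} := by
  change _ = relIdeal
  have hle : relIdeal ≤ RingHom.ker (aeval ![(X 0 : MvPolynomial (Fin 3) ℂ), X 1, X 0 * X 2,
      X 1 * X 2, X 0 * (X 2) ^ 2 - X 2] :
        MvPolynomial (Fin 5) ℂ →ₐ[ℂ] MvPolynomial (Fin 3) ℂ) := by
    refine Ideal.span_le.mpr ?_
    rintro _ (rfl | rfl | rfl) <;> simp <;> ring
  refine le_antisymm (fun f hf => ?_) hle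
  obtain ⟨n, p, hp⟩ := exists_elimination f
  have hcomp : (aeval ![(X 0 : MvPolynomial (Fin 3) ℂ), X 1, X 0 * X 2, X 1 * X 2,
      X 0 * (X 2) ^ 2 - X 2]).comp incl
      = (aeval ![(X 0 : MvPolynomial (Fin 3) ℂ), X 1, X 0 * X 2] :
        MvPolynomial (Fin 3) ℂ →ₐ[ℂ] MvPolynomial (Fin 3) ℂ) := by
    apply MvPolynomial.algHom_ext
    intro k
    fin_cases k <;> simp [incl]
  have hp0 : p = 0 := by
    apply eq_zero_of_aeval
    rw [← hcomp, AlgHom.comp_apply]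
    have h1 := hle hp
    rw [RingHom.mem_ker, map_sub, map_mul, RingHom.mem_ker.mp hf, mul_zero, zero_sub,
      neg_eq_zero] at h1
    exact h1
  rw [hp0, map_zero, sub_zero] at hp
  exact mem_of_X_pow_mul_mem n hp

end
end
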